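/- Let α, β, d, t, p, q ∈ ℝ. If R_q(L_p(R_t(0,0,α))) = (d, 0, β) (an RLR Dubins path), then cos p = (6 − d² + 2·cos(α − β) + 2d·(sin α − sin β)) / 8. (The middle-arc length of an RLR path satisfies this cosine identity.) -/

import Mathlib

open Real

/-- Left-turn operator: arc of length `v` along the unit left-turning circle. -/
noncomputable def Lop (v : ℝ) : ℝ × ℝ × ℝ → ℝ × ℝ × ℝ :=
  fun c => (c.1 + Real.sin (c.2.2 + v) - Real.sin c.2.2,
            c.2.1 - Real.cos (c.2.2 + v) + Real.cos c.2.2,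
            c.2.2 + v)

/-- Right-turn operator: arc of length `v` along the unit right-turning circle. -/
noncomputable def Rop (v : ℝ) : ℝ × ℝ × ℝ → ℝ × ℝ × ℝ :=
  fun c => (c.1 - Real.sin (c.2.2 - v) + Real.sin c.2.2,
            c.2.1 + Real.cos (c.2.2 - v) - Real.cos c.2.2,
            c.2.2 - v)

/-- Straight-motion operator: straight segment of length `v`. -/
noncomputable def Sop (v : ℝ) : ℝ × ℝ × ℝ → ℝ × ℝ × ℝ :=
  fun c => (c.1 + v * Real.cos c.2.2, c.2.1 + v * Real.sin c.2.2, c.2.2)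

/-!
A right turn fixes the centre of the right-turning circle through the current configuration, and a
left turn fixes the centre of the left-turning one. Along an RLR path the right centre therefore
moves only during the middle arc, where it travels through the angle `p` on the circle of radius
`2` about the left centre. The squared chord `8 * (1 - cos p)` is the squared distance between the
right centres of the two endpoints.
-/

/-- The unit vector pointing to the right of a vehicle with heading angle `φ`. -/
noncomputable def rightNormal (φ : ℝ) : EuclideanSpace ℝ (Fin 2) :=
  !₂[sin φ, -cos φ]

/-- The centre of the unit circle on which the configuration `c` turns right. -/
noncomputable def rightCenter (c : ℝ × ℝ × ℝ) : EuclideanSpace ℝ (Fin 2) :=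
  !₂[c.1, c.2.1] + rightNormal c.2.2

/-- The centre of the unit circle on which the configuration `c` turns left. -/
noncomputable def leftCenter (c : ℝ × ℝ × ℝ) : EuclideanSpace ℝ (Fin 2) :=
  !₂[c.1, c.2.1] - rightNormal c.2.2

theorem dist_rightNormal_sq (φ ψ : ℝ) :
    dist (rightNormal φ) (rightNormal ψ) ^ 2 = 2 * (1 - cos (φ - ψ)) := by
  simp only [rightNormal, EuclideanSpace.dist_sq_eq, Fin.sum_univ_two, Real.dist_eq, sq_abs,
    Matrix.cons_val_zero, Matrix.cons_val_one, cos_sub]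
  linear_combination sin_sq_add_cos_sq φ + sin_sq_add_cos_sq ψ

theorem rightCenter_Rop (v : ℝ) (c : ℝ × ℝ × ℝ) : rightCenter (Rop v c) = rightCenter c := by
  refine PiLp.ext (Fin.forall_fin_two.mpr ⟨?_, ?_⟩) <;>
    simp only [rightCenter, rightNormal, Rop, PiLp.add_apply, Matrix.cons_val_zero,
      Matrix.cons_val_one] <;>
    ring

theorem leftCenter_Lop (v : ℝ) (c : ℝ × ℝ × ℝ) : leftCenter (Lop v c) = leftCenter c := by
  refine PiLp.ext (Fin.forall_fin_two.mpr ⟨?_, ?_⟩) <;>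
    simp only [leftCenter, rightNormal, Lop, PiLp.sub_apply, Matrix.cons_val_zero,
      Matrix.cons_val_one] <;>
    ring

theorem rightCenter_eq_leftCenter_add (c : ℝ × ℝ × ℝ) :
    rightCenter c = leftCenter c + (2 : ℝ) • rightNormal c.2.2 := by
  rw [rightCenter, leftCenter]
  module

theorem dist_rightCenter_Lop_sq (v : ℝ) (c : ℝ × ℝ × ℝ) :
    dist (rightCenter (Lop v c)) (rightCenter c) ^ 2 = 8 * (1 - cos v) := by
  have heading : (Lop v c).2.2 - c.2.2 = v := add_sub_cancel_left c.2.2 v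
  calc dist (rightCenter (Lop v c)) (rightCenter c) ^ 2
      = (2 * dist (rightNormal (Lop v c).2.2) (rightNormal c.2.2)) ^ 2 := by
        rw [rightCenter_eq_leftCenter_add (Lop v c), rightCenter_eq_leftCenter_add c,
          leftCenter_Lop, dist_add_left, dist_smul₀, Real.norm_ofNat]
    _ = 8 * (1 - cos v) := by
        rw [mul_pow, dist_rightNormal_sq, heading]
        ring

theorem dist_rightCenter_rlr_sq (t p q : ℝ) (c : ℝ × ℝ × ℝ) :
    dist (rightCenter (Rop q (Lop p (Rop t c)))) (rightCenter c) ^ 2 = 8 * (1 - cos p) := by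
  rw [rightCenter_Rop, ← rightCenter_Rop t c, dist_rightCenter_Lop_sq]

theorem dist_rightCenter_sq (x y α x' y' β : ℝ) :
    dist (rightCenter (x', y', β)) (rightCenter (x, y, α)) ^ 2 =
      (x' - x) ^ 2 + (y' - y) ^ 2 + 2 - 2 * cos (α - β)
        - 2 * (x' - x) * (sin α - sin β) + 2 * (y' - y) * (cos α - cos β) := by
  simp only [rightCenter, rightNormal, EuclideanSpace.dist_sq_eq, Fin.sum_univ_two, Real.dist_eq,
    sq_abs, PiLp.add_apply, Matrix.cons_val_zero, Matrix.cons_val_one, cos_sub]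
  linear_combination sin_sq_add_cos_sq α + sin_sq_add_cos_sq β

theorem rlr_middle_arc_cos_general (x y α x' y' β t p q : ℝ)
    (h : Rop q (Lop p (Rop t (x, y, α))) = (x', y', β)) :
    cos p = (6 - (x' - x) ^ 2 - (y' - y) ^ 2 + 2 * cos (α - β)
      + 2 * (x' - x) * (sin α - sin β) - 2 * (y' - y) * (cos α - cos β)) / 8 := by
  have chord := dist_rightCenter_rlr_sq t p q (x, y, α)
  rw [h, dist_rightCenter_sq] at chord
  linarith

theorem rlr_middle_arc_cos (α β d t p q : ℝ)
    (h : Rop q (Lop p (Rop t (0, 0, α))) = (d, 0, β)) :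
    Real.cos p = (6 - d ^ 2 + 2 * Real.cos (α - β) + 2 * d * (Real.sin α - Real.sin β)) / 8 := by
  simpa using rlr_middle_arc_cos_general 0 0 α d 0 β t p q h
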